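/- arXiv:1207.3632 — 2 statements merged into one kernel-verified Lean document; each statement's English description precedes it below -/
import Mathlib

section
/- Relative Oscillation Theorem, half-open case: Let λ_0, λ_1 ∈ ℝ and for j = 0,1 let u_{j,−}(λ_j) be a solution of τ_j u = λ_j u with u_{j,−}(λ_j, 0) = 0 and u_{j,+}(λ_j) a solution of τ_j u = λ_j u with u_{j,+}(λ_j, N) = 0. Then E_{(−∞,λ_1)}(J_1) − E_{(−∞,λ_0]}(J_0) = #_{(0,N]}(u_{0,+}(λ_0), u_{1,−}(λ_1)) = #_{(0,N]}(u_{0,−}(λ_0), u_{1,+}(λ_1)). -/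
/-!
The weighted node count of the Wronskian is reduced to ordinary node counts of the two solutions,
which are then computed by Sturm oscillation theory.

Let `θ_j` be the Prüfer angle of `u_j`. The sign of the Wronskian is that of `sin (θ₁ - θ₀)`, up to
the sign determined by the numbers `⌈θ_j / π⌉`, and the weighted node sign at `n` is the increment
of `⌈(θ₁ - θ₀) / π⌉` from `n` to `n + 1`. No angles are used: `⌈θ_j / π⌉` is the node count `nn`,
and the remaining contribution to `⌈(θ₁ - θ₀) / π⌉` is the indicator `br` of the event that the
angle of `u_1`, reduced to `(0, π]`, exceeds that of `u_0`. The increment formula is `step`;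
summed up (`cntCC_eq`) it expresses the count on `[0, N]` by `nn u1 N - nn u0 N` and boundary terms,
evaluated in `br_left_zero` and `br_right_zero`. Applied to the two solutions `u_±` of one and the
same equation, whose Wronskian is constant, it also relates `nn u_+ N` to `nn u_- N` (`nn_plus`).

It remains to show that the eigenvalues below `z` are counted by the nodes of `u_-(z)` in `(0, N)`
(`sturm`). Normalise `u_-(z)` to `P z` with `P z 1 = 1`; the eigenvalues are the zeros of
`z ↦ P z N` (`isEV_iff`). By the Christoffel–Darboux identity `CD`, at a zero of `P · (n + 1)` this
function crosses zero in the direction prescribed by the sign of `P z n`. By induction on `n`, the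
node count, as a function of `z`, is locally constant except for a jump by one immediately to the
right of each zero of `P · (n + 1)` (`F_local`). The number of zeros below `z` has the same jumps,
so the two differ by a constant, which is found by letting `z → -∞` (`F_eq`).
-/

open Real

noncomputable section

/-- The Jacobi difference expression `(τ u)(n) = a(n)u(n+1) + a(n-1)u(n-1) + b(n)u(n)`. -/
def jTau (a b : ℤ → ℝ) (u : ℤ → ℝ) (n : ℤ) : ℝ :=
  a n * u (n + 1) + a (n - 1) * u (n - 1) + b n * u n

/-- `u` is a solution of `τ u = z u`: not identically zero and satisfying the recursion. -/
def IsJSolution (a b : ℤ → ℝ) (z : ℝ) (u : ℤ → ℝ) : Prop :=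
  u ≠ 0 ∧ ∀ n : ℤ, jTau a b u n = z * u n

/-- The (N-1)×(N-1) Jacobi matrix with diagonal b(1),…,b(N-1) and
off-diagonal a(1),…,a(N-2). -/
def jMatrix (N : ℕ) (a b : ℤ → ℝ) : Matrix (Fin (N - 1)) (Fin (N - 1)) ℝ :=
  fun i j =>
    if (i : ℕ) = (j : ℕ) then b (((i : ℕ) : ℤ) + 1)
    else if (i : ℕ) + 1 = (j : ℕ) then a (((i : ℕ) : ℤ) + 1)
    else if (j : ℕ) + 1 = (i : ℕ) then a (((j : ℕ) : ℤ) + 1)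
    else 0

/-- `μ` is an eigenvalue of the matrix `J`. -/
def IsEV {m : ℕ} (J : Matrix (Fin m) (Fin m) ℝ) (μ : ℝ) : Prop :=
  ∃ v : Fin m → ℝ, v ≠ 0 ∧ J.mulVec v = μ • v

/-- The number of eigenvalues of `J` in `Ω`. -/
def evCount {m : ℕ} (J : Matrix (Fin m) (Fin m) ℝ) (Ω : Set ℝ) : ℕ :=
  {μ ∈ Ω | IsEV J μ}.ncard

/-- The (modified) Wronskian `W_n(u₀,u₁) = u₀(n)a₁(n)u₁(n+1) - u₁(n)a₀(n)u₀(n+1)`. -/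
def jW (a0 a1 : ℤ → ℝ) (u0 u1 : ℤ → ℝ) (n : ℤ) : ℝ :=
  u0 n * a1 n * u1 (n + 1) - u1 n * a0 n * u0 (n + 1)

open Classical in
/-- The weighted node sign `#_n(u₀,u₁) ∈ {-1,0,1}` of the Wronskian at `n`. -/
def jSgn (a0 a1 u0 u1 : ℤ → ℝ) (n : ℤ) : ℤ :=
  if jW a0 a1 u0 u1 (n + 1) * u0 (n + 1) * u1 (n + 1) > 0 ∧
      (jW a0 a1 u0 u1 n * jW a0 a1 u0 u1 (n + 1) < 0 ∨
        (jW a0 a1 u0 u1 n = 0 ∧ jW a0 a1 u0 u1 (n + 1) ≠ 0)) then 1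
  else if jW a0 a1 u0 u1 n * u0 (n + 1) * u1 (n + 1) > 0 ∧
      (jW a0 a1 u0 u1 n * jW a0 a1 u0 u1 (n + 1) < 0 ∨
        (jW a0 a1 u0 u1 n ≠ 0 ∧ jW a0 a1 u0 u1 (n + 1) = 0)) then -1
  else 0

/-- `#_{[m,n]}(u₀,u₁) = Σ_{j=m}^{n-1} #_j(u₀,u₁)`. -/
def cntCC (a0 a1 u0 u1 : ℤ → ℝ) (m n : ℤ) : ℤ :=
  ∑ j ∈ Finset.Ico m n, jSgn a0 a1 u0 u1 j

open Classical in
/-- `#_{(m,n]}(u₀,u₁)`. -/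
def cntOC (a0 a1 u0 u1 : ℤ → ℝ) (m n : ℤ) : ℤ :=
  cntCC a0 a1 u0 u1 m n - if jW a0 a1 u0 u1 m = 0 then 1 else 0

open Classical in
/-- `#_{[m,n)}(u₀,u₁)`. -/
def cntCO (a0 a1 u0 u1 : ℤ → ℝ) (m n : ℤ) : ℤ :=
  cntCC a0 a1 u0 u1 m n + if jW a0 a1 u0 u1 n = 0 then 1 else 0

open Classical in
/-- `#_{(m,n)}(u₀,u₁)`. -/
def cntOO (a0 a1 u0 u1 : ℤ → ℝ) (m n : ℤ) : ℤ :=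
  cntCC a0 a1 u0 u1 m n - (if jW a0 a1 u0 u1 m = 0 then 1 else 0)
    + (if jW a0 a1 u0 u1 n = 0 then 1 else 0)

/-- `n` is a node of `u`: `u(n) = 0` or `a(n)u(n)u(n+1) > 0`. -/
def IsNode (a u : ℤ → ℝ) (n : ℤ) : Prop :=
  u n = 0 ∨ a n * u n * u (n + 1) > 0

open Classical in
/-- The number of nodes of `u` between `m` and `l`: nodes `n` with `m < n < l`,
plus one if `m` is a node with `u(m) ≠ 0`. -/
def nodeCount (a u : ℤ → ℝ) (m l : ℤ) : ℕ :=
  ((Finset.Ioo m l).filter (fun n => IsNode a u n)).card +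
    if IsNode a u m ∧ u m ≠ 0 then 1 else 0

/-- `ρ, θ` are Prüfer variables for `u` (w.r.t. the coefficient `a`). -/
def IsPrufer (a u ρ θ : ℤ → ℝ) : Prop :=
  ∀ n : ℤ, 0 < ρ n ∧ u n = ρ n * Real.sin (θ n) ∧
    -(a n) * u (n + 1) = ρ n * Real.cos (θ n) ∧
    ⌈θ n / π⌉ ≤ ⌈θ (n + 1) / π⌉ ∧ ⌈θ (n + 1) / π⌉ ≤ ⌈θ n / π⌉ + 1

/-! ### Nodes, Prüfer signs and the weighted node sign -/

/-- Indicator (with values in `ℤ`) that `n` is a node of `u`; for `a < 0` this is `IsNode`. -/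
def nd (u : ℤ → ℝ) (n : ℤ) : ℤ := if u n = 0 ∨ u n * u (n + 1) < 0 then 1 else 0

/-- The sign `s = ±1` for which the Prüfer angle of `s • u` at `n` can be taken in `(0, π]`, the
angle being that of the vector with sine part `u n` and cosine part `-a n * u (n + 1)`, `a < 0`. -/
def sg (u : ℤ → ℝ) (n : ℤ) : ℝ := if 0 < u n ∨ (u n = 0 ∧ u (n + 1) < 0) then 1 else -1

/-- Indicator that the reduced Prüfer angle (the one in `(0, π]`) of `u1` exceeds that of `u0` at
`n`: the Wronskian is, up to a positive factor and the two signs, the sine of their difference. -/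
def br (a0 a1 u0 u1 : ℤ → ℝ) (n : ℤ) : ℤ :=
  if 0 < sg u0 n * sg u1 n * jW a0 a1 u0 u1 n then 1 else 0

lemma sol_rec {a b : ℤ → ℝ} {z : ℝ} {u : ℤ → ℝ} (h : IsJSolution a b z u) (n : ℤ) :
    a (n + 1) * u (n + 2) = (z - b (n + 1)) * u (n + 1) - a n * u n := by
  have := h.2 (n + 1)
  simp only [jTau] at this
  rw [show n + 1 + 1 = n + 2 by ring, show n + 1 - 1 = n by ring] at this
  linarith

/-- A solution does not vanish at two consecutive points. -/
lemma sol_ne {a b : ℤ → ℝ} {z : ℝ} {u : ℤ → ℝ} (ha : ∀ n, a n < 0) (h : IsJSolution a b z u)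
    (n : ℤ) (h0 : u n = 0) : u (n + 1) ≠ 0 := by
  intro h1
  apply h.1
  have up : ∀ k : ℕ, u (n + k) = 0 ∧ u (n + k + 1) = 0 := by
    intro k
    induction k with
    | zero => simpa using ⟨h0, h1⟩
    | succ k ih =>
      have := sol_rec h (n + k)
      rw [ih.1, ih.2] at this
      push_cast
      rw [show n + ((k : ℤ) + 1) = n + k + 1 by ring, show n + (k : ℤ) + 1 + 1 = n + k + 2 by ring]
      refine ⟨ih.2, ?_⟩
      simpa [(ha _).ne] using this
  have down : ∀ k : ℕ, u (n - k) = 0 ∧ u (n - k + 1) = 0 := by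
    intro k
    induction k with
    | zero => simpa using ⟨h0, h1⟩
    | succ k ih =>
      have := sol_rec h (n - k - 1)
      rw [show n - (k : ℤ) - 1 + 2 = n - k + 1 by ring, show n - (k : ℤ) - 1 + 1 = n - k by ring,
        ih.1, ih.2] at this
      push_cast
      rw [show n - ((k : ℤ) + 1) = n - k - 1 by ring, show n - (k : ℤ) - 1 + 1 = n - k by ring]
      refine ⟨?_, ih.1⟩
      simpa [(ha _).ne] using this
  funext m
  rcases le_total n m with hm | hm
  · have := (up (m - n).toNat).1
    rwa [show n + ((m - n).toNat : ℤ) = m by omega] at this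
  · have := (down (n - m).toNat).1
    rwa [show n - ((n - m).toNat : ℤ) = m by omega] at this

lemma sol_neg {a b : ℤ → ℝ} {z : ℝ} {u : ℤ → ℝ} (h : IsJSolution a b z u) :
    IsJSolution a b z (-u) := by
  refine ⟨neg_ne_zero.2 h.1, fun n => ?_⟩
  have := h.2 n
  simp only [jTau, Pi.neg_apply] at *
  linarith

lemma nd_neg (u : ℤ → ℝ) (n : ℤ) : nd (-u) n = nd u n := by simp [nd]

lemma sg_neg {u : ℤ → ℝ} {n : ℤ} (h : u n = 0 → u (n + 1) ≠ 0) : sg (-u) n = -sg u n := by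
  simp only [sg, Pi.neg_apply]
  rcases lt_trichotomy (u n) 0 with h0 | h0 | h0
  · simp [h0, h0.not_gt, h0.ne]
  · rcases lt_or_gt_of_ne (h h0) with h1 | h1
    · simp [h0, h1, h1.not_gt]
    · simp [h0, h1, h1.not_gt]
  · simp [h0, h0.not_gt, h0.ne']

lemma jW_neg_left (a0 a1 u0 u1 : ℤ → ℝ) (n : ℤ) :
    jW a0 a1 (-u0) u1 n = -jW a0 a1 u0 u1 n := by
  simp only [jW, Pi.neg_apply]; ring

lemma jW_neg_right (a0 a1 u0 u1 : ℤ → ℝ) (n : ℤ) :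
    jW a0 a1 u0 (-u1) n = -jW a0 a1 u0 u1 n := by
  simp only [jW, Pi.neg_apply]; ring

lemma jSgn_neg_left (a0 a1 u0 u1 : ℤ → ℝ) (n : ℤ) :
    jSgn a0 a1 (-u0) u1 n = jSgn a0 a1 u0 u1 n := by
  simp only [jSgn, jW_neg_left, Pi.neg_apply, neg_mul_neg, neg_eq_zero, ne_eq]

lemma jSgn_neg_right (a0 a1 u0 u1 : ℤ → ℝ) (n : ℤ) :
    jSgn a0 a1 u0 (-u1) n = jSgn a0 a1 u0 u1 n := by
  simp only [jSgn, jW_neg_right, Pi.neg_apply, neg_mul, mul_neg, neg_neg, neg_eq_zero,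
    ne_eq]

lemma br_neg_left {a0 a1 u0 u1 : ℤ → ℝ} {n : ℤ} (h : u0 n = 0 → u0 (n + 1) ≠ 0) :
    br a0 a1 (-u0) u1 n = br a0 a1 u0 u1 n := by
  simp only [br, jW_neg_left, sg_neg h, neg_mul, mul_neg, neg_neg]

lemma br_neg_right {a0 a1 u0 u1 : ℤ → ℝ} {n : ℤ} (h : u1 n = 0 → u1 (n + 1) ≠ 0) :
    br a0 a1 u0 (-u1) n = br a0 a1 u0 u1 n := by
  simp only [br, jW_neg_right, sg_neg h, neg_mul, mul_neg, neg_neg]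

lemma sg_nonneg_mul (u : ℤ → ℝ) (n : ℤ) : 0 ≤ sg u n * u n := by
  simp only [sg]
  split_ifs with h
  · rcases h with h | h
    · linarith
    · simp [h.1]
  · push Not at h
    linarith [h.1]

lemma sg_ne (u : ℤ → ℝ) (n : ℤ) : sg u n ≠ 0 := by
  simp only [sg]; split_ifs <;> norm_num

lemma sg_pos_of {u : ℤ → ℝ} {n : ℤ} (h : u n ≠ 0) : 0 < sg u n * u n :=
  lt_of_le_of_ne (sg_nonneg_mul u n) (mul_ne_zero (sg_ne u n) h).symm

lemma sg_zero {u : ℤ → ℝ} {n : ℤ} (h : u n = 0) (h1 : u (n + 1) ≠ 0) :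
    sg u n * u (n + 1) < 0 := by
  simp only [sg, h]
  rcases lt_or_gt_of_ne h1 with h1 | h1
  · simp [h1]
  · simp [h1, h1.not_gt]

/-- If `u` changes sign from `n` to `n + 2` through a zero at `n + 1`, the node belongs to `n + 1`,
not to `n`, and `sg` is still unchanged at `n + 1`. -/
lemma sg_step_zero {u : ℤ → ℝ} {n : ℤ} (h : u n ≠ 0) (h1 : u (n + 1) = 0)
    (h2 : u (n + 2) * u n < 0) : sg u (n + 1) = sg u n ∧ nd u n = 0 := by
  simp only [sg, nd, h1, show n + 1 + 1 = n + 2 by ring]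
  rcases lt_or_gt_of_ne h with h | h
  · have : 0 < u (n + 2) := by nlinarith
    simp [h.ne, h.not_gt, this.not_gt]
  · have : u (n + 2) < 0 := by nlinarith
    simp [h, h.ne', this]

/-- The step formula after normalising both solutions to be positive at `n + 1`. Then the left side
is `[W (n + 1) > 0] - [W n > 0]`, and the sign of `W n` is forced whenever `u0 n`, `u1 n` lie on
different sides of zero. -/
lemma step_pos {a0 a1 u0 u1 : ℤ → ℝ} (ha0 : ∀ n, a0 n < 0) (ha1 : ∀ n, a1 n < 0) (n : ℤ)
    (y0 : 0 < u0 (n + 1)) (y1 : 0 < u1 (n + 1)) :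
    jSgn a0 a1 u0 u1 n = nd u1 n - nd u0 n + br a0 a1 u0 u1 (n + 1) - br a0 a1 u0 u1 n := by
  have A0 := ha0 n
  have A1 := ha1 n
  have e1 : sg u0 (n + 1) = 1 := by simp [sg, y0]
  have e2 : sg u1 (n + 1) = 1 := by simp [sg, y1]
  have hs : jSgn a0 a1 u0 u1 n = (if 0 < jW a0 a1 u0 u1 (n + 1) then 1 else 0)
      - (if 0 < jW a0 a1 u0 u1 n then 1 else 0) := by
    simp only [jSgn]
    generalize jW a0 a1 u0 u1 (n + 1) = w'
    generalize jW a0 a1 u0 u1 n = w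
    simp only [gt_iff_lt, mul_pos_iff_of_pos_right y0, mul_pos_iff_of_pos_right y1]
    rcases lt_trichotomy w 0 with h | h | h <;> rcases lt_trichotomy w' 0 with h' | h' | h' <;>
      simp [h, h', not_lt_of_gt, ne_of_lt, ne_of_gt, mul_neg_iff]
  have sgx : ∀ u : ℤ → ℝ, 0 < u (n + 1) →
      (0 < u n ∧ sg u n = 1 ∧ nd u n = 0) ∨ (u n ≤ 0 ∧ sg u n = -1 ∧ nd u n = 1) := by
    intro u hu
    rcases lt_or_ge 0 (u n) with h | h
    · left
      refine ⟨h, by simp [sg, h], ?_⟩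
      have := mul_pos h hu
      simp [nd, h.ne', this.not_gt]
    · right
      refine ⟨h, by simp [sg, h.not_gt, hu.not_gt], ?_⟩
      rcases h.lt_or_eq with h | h
      · have := mul_neg_of_neg_of_pos h hu
        simp [nd, this]
      · simp [nd, h]
  rw [hs]
  simp only [br, e1, e2]
  rcases sgx u0 y0 with ⟨x0, s0, n0⟩ | ⟨x0, s0, n0⟩ <;>
    rcases sgx u1 y1 with ⟨x1, s1, n1⟩ | ⟨x1, s1, n1⟩ <;> rw [s0, n0, s1, n1]
  · simp
  · have : jW a0 a1 u0 u1 n < 0 := by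
      have p1 := mul_pos (mul_pos x0 (neg_pos.2 A1)) y1
      have p2 := mul_nonneg (mul_nonneg (neg_nonneg.2 x1) (neg_pos.2 A0).le) y0.le
      simp only [jW]; linarith
    simp [this, this.not_gt]
  · have : 0 < jW a0 a1 u0 u1 n := by
      have p1 := mul_pos (mul_pos x1 (neg_pos.2 A0)) y0
      have p2 := mul_nonneg (mul_nonneg (neg_nonneg.2 x0) (neg_pos.2 A1).le) y1.le
      simp only [jW]; linarith
    simp [this, this.not_gt]
    ring
  · simp

lemma nd_eq {u : ℤ → ℝ} {n : ℤ} (h1 : u (n + 1) ≠ 0) :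
    nd u n = if sg u n * u (n + 1) < 0 then 1 else 0 := by
  simp only [nd, sg]
  rcases lt_trichotomy (u n) 0 with h | h | h <;> rcases lt_or_gt_of_ne h1 with h1 | h1 <;>
    simp [h, h1, not_lt_of_gt, ne_of_lt, ne_of_gt, mul_neg_iff]

lemma sol_zero {a b : ℤ → ℝ} {z : ℝ} {u : ℤ → ℝ} (ha : ∀ n, a n < 0) (h : IsJSolution a b z u)
    (n : ℤ) (h1 : u (n + 1) = 0) :
    a (n + 1) * u (n + 2) = - (a n * u n) ∧ u n ≠ 0 ∧ u (n + 2) * u n < 0 := by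
  have e := sol_rec h n
  rw [h1] at e
  have e' : a (n + 1) * u (n + 2) = - (a n * u n) := by linarith
  have x : u n ≠ 0 := fun h0 => sol_ne ha h n h0 h1
  refine ⟨e', x, ?_⟩
  have p1 : 0 < (a n * u n) * (a n * u n) := mul_self_pos.2 (mul_ne_zero (ha n).ne x)
  have p2 : a n * a (n + 1) * (u (n + 2) * u n) < 0 := by
    have : a n * a (n + 1) * (u (n + 2) * u n) = (a n * u n) * (a (n + 1) * u (n + 2)) := by ring
    rw [this, e']; linarith
  exact (pos_iff_neg_of_mul_neg p2).1 (mul_pos_of_neg_of_neg (ha n) (ha (n + 1)))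

/-- Where one of the solutions vanishes at `n + 1`, the angle difference crosses no multiple
of `π` (and the weighted node sign is zero as well). -/
lemma step_zero {a0 a1 b0 b1 u0 u1 : ℤ → ℝ} {z0 z1 : ℝ} (ha0 : ∀ n, a0 n < 0)
    (ha1 : ∀ n, a1 n < 0)
    (h0 : IsJSolution a0 b0 z0 u0) (h1 : IsJSolution a1 b1 z1 u1) (n : ℤ)
    (y : u0 (n + 1) * u1 (n + 1) = 0) :
    nd u1 n - nd u0 n + br a0 a1 u0 u1 (n + 1) - br a0 a1 u0 u1 n = 0 := by
  have A0 := ha0 n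
  have A1 := ha1 n
  by_cases y0 : u0 (n + 1) = 0 <;> by_cases y1 : u1 (n + 1) = 0
  · obtain ⟨-, x0, m0⟩ := sol_zero ha0 h0 n y0
    obtain ⟨-, x1, m1⟩ := sol_zero ha1 h1 n y1
    rw [(sg_step_zero x0 y0 m0).2, (sg_step_zero x1 y1 m1).2]
    simp [br, jW, y0, y1]
  · obtain ⟨e, x0, m0⟩ := sol_zero ha0 h0 n y0
    obtain ⟨s, d⟩ := sg_step_zero x0 y0 m0
    have X := sg_pos_of x0
    have Y := sg_pos_of y1
    have w : jW a0 a1 u0 u1 n = a1 n * u0 n * u1 (n + 1) := by simp only [jW, y0]; ring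
    have w' : jW a0 a1 u0 u1 (n + 1) = a0 n * u0 n * u1 (n + 1) := by
      simp only [jW, y0, show n + 1 + 1 = n + 2 by ring]
      linear_combination (- u1 (n + 1)) * e
    have b' : br a0 a1 u0 u1 (n + 1) = 0 := by
      simp only [br, w', s]
      have := mul_neg_of_neg_of_pos A0 (mul_pos X Y)
      rw [if_neg]
      linarith
    have b : br a0 a1 u0 u1 n = nd u1 n := by
      rw [nd_eq y1]
      simp only [br, w]
      rw [show sg u0 n * sg u1 n * (a1 n * u0 n * u1 (n + 1))
        = (a1 n * (sg u0 n * u0 n)) * (sg u1 n * u1 (n + 1)) by ring]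
      have := mul_neg_of_neg_of_pos A1 X
      simp only [mul_pos_iff, this.not_gt, this, false_and, true_and, false_or]
    rw [b, b', d]; ring
  · obtain ⟨e, x1, m1⟩ := sol_zero ha1 h1 n y1
    obtain ⟨s, d⟩ := sg_step_zero x1 y1 m1
    have X := sg_pos_of x1
    have Y := sg_pos_of y0
    have w : jW a0 a1 u0 u1 n = - (a0 n * u1 n * u0 (n + 1)) := by simp only [jW, y1]; ring
    have w' : jW a0 a1 u0 u1 (n + 1) = - (a1 n * u1 n * u0 (n + 1)) := by
      simp only [jW, y1, show n + 1 + 1 = n + 2 by ring]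
      linear_combination (u0 (n + 1)) * e
    have b' : br a0 a1 u0 u1 (n + 1) = 1 := by
      simp only [br, w', s]
      have := mul_neg_of_neg_of_pos A1 (mul_pos X Y)
      rw [if_pos]
      linarith
    have b : br a0 a1 u0 u1 n = 1 - nd u0 n := by
      rw [nd_eq y0]
      simp only [br, w]
      rw [show sg u0 n * sg u1 n * -(a0 n * u1 n * u0 (n + 1))
        = (-a0 n * (sg u1 n * u1 n)) * (sg u0 n * u0 (n + 1)) by ring]
      have := mul_pos (neg_pos.2 A0) X
      simp only [mul_pos_iff_of_pos_left this]
      rcases lt_or_gt_of_ne (mul_ne_zero (sg_ne u0 n) y0) with h | h <;> simp [h, h.not_gt]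
    rw [b, b', d]; ring
  · exact absurd y (mul_ne_zero y0 y1)

/-- The weighted node sign of the Wronskian is the increment of `⌈(θ₁ - θ₀) / π⌉`, where
`⌈θ_j / π⌉` increases by `nd u_j n` from `n` to `n + 1`. -/
lemma step {a0 a1 b0 b1 u0 u1 : ℤ → ℝ} {z0 z1 : ℝ} (ha0 : ∀ n, a0 n < 0) (ha1 : ∀ n, a1 n < 0)
    (h0 : IsJSolution a0 b0 z0 u0) (h1 : IsJSolution a1 b1 z1 u1) (n : ℤ) :
    jSgn a0 a1 u0 u1 n = nd u1 n - nd u0 n + br a0 a1 u0 u1 (n + 1) - br a0 a1 u0 u1 n := by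
  by_cases y : u0 (n + 1) * u1 (n + 1) = 0
  · rw [step_zero ha0 ha1 h0 h1 n y]
    simp [jSgn, mul_assoc, y]
  · have y0 := left_ne_zero_of_mul y
    have y1 := right_ne_zero_of_mul y
    have r0 := sol_ne ha0 h0
    have r1 := sol_ne ha1 h1
    rcases lt_or_gt_of_ne y0 with y0 | y0 <;> rcases lt_or_gt_of_ne y1 with y1 | y1
    · have := step_pos (u0 := -u0) (u1 := -u1) ha0 ha1 n (by simpa) (by simpa)
      rwa [jSgn_neg_left, jSgn_neg_right, br_neg_left (r0 _), br_neg_left (r0 _),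
        br_neg_right (r1 _), br_neg_right (r1 _), nd_neg, nd_neg] at this
    · have := step_pos (u0 := -u0) (u1 := u1) ha0 ha1 n (by simpa) (by simpa)
      rwa [jSgn_neg_left, br_neg_left (r0 _), br_neg_left (r0 _), nd_neg] at this
    · have := step_pos (u0 := u0) (u1 := -u1) ha0 ha1 n (by simpa) (by simpa)
      rwa [jSgn_neg_right, br_neg_right (r1 _), br_neg_right (r1 _), nd_neg] at this
    · exact step_pos ha0 ha1 n y0 y1

/-! ### Sturm oscillation for the solution vanishing at `0` -/

/-- The solution of `τ u = z u` with `u 0 = 0` and `u 1 = 1`, on `ℕ`. -/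
def P (a b : ℤ → ℝ) (z : ℝ) : ℕ → ℝ
  | 0 => 0
  | 1 => 1
  | n + 2 => ((z - b ((n : ℤ) + 1)) * P a b z (n + 1) - a n * P a b z n) / a ((n : ℤ) + 1)

/-- The number of nodes of `P a b z` in `[0, n)`. -/
def F (a b : ℤ → ℝ) (n : ℕ) (z : ℝ) : ℤ :=
  ∑ k ∈ Finset.range n, if P a b z k = 0 ∨ P a b z k * P a b z (k + 1) < 0 then 1 else 0

lemma P_rec {a b : ℤ → ℝ} (ha : ∀ n, a n < 0) (z : ℝ) (n : ℕ) :
    a ((n : ℤ) + 1) * P a b z (n + 2)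
      = (z - b ((n : ℤ) + 1)) * P a b z (n + 1) - a n * P a b z n := by
  rw [P, mul_div_cancel₀ _ (ha _).ne]

lemma P_cont (a b : ℤ → ℝ) (n : ℕ) : Continuous fun z => P a b z n := by
  induction n using Nat.strong_induction_on with
  | _ n ih =>
    match n with
    | 0 => simpa [P] using continuous_const
    | 1 => simpa [P] using continuous_const
    | n + 2 =>
      have h1 := ih (n + 1) (by omega)
      have h0 := ih n (by omega)
      simp only [P]
      fun_prop

/-- A three-term sequence with `w 0 = 0` is a multiple of `P`. -/
lemma eq_P {a b : ℤ → ℝ} (ha : ∀ n, a n < 0) (z : ℝ) (N : ℕ) (w : ℕ → ℝ) (h0 : w 0 = 0)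
    (h : ∀ n, n + 1 < N → a ((n : ℤ) + 1) * w (n + 2)
      = (z - b ((n : ℤ) + 1)) * w (n + 1) - a n * w n) :
    ∀ n, n ≤ N → w n = w 1 * P a b z n := by
  intro n
  induction n using Nat.strong_induction_on with
  | _ n ih =>
    match n with
    | 0 => simp [P, h0]
    | 1 => simp [P]
    | n + 2 =>
      intro hn
      have e1 := ih (n + 1) (by omega) (by omega)
      have e0 := ih n (by omega) (by omega)
      apply mul_left_cancel₀ (ha ((n : ℤ) + 1)).ne
      rw [h n (by omega), e1, e0]
      linear_combination (- w 1) * P_rec (b := b) ha z n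

lemma P_ne {a b : ℤ → ℝ} (ha : ∀ n, a n < 0) (z : ℝ) (n : ℕ) (h : P a b z n = 0) :
    P a b z (n + 1) ≠ 0 := by
  induction n with
  | zero => simp [P]
  | succ n ih =>
    intro h2
    have := P_rec (b := b) ha z n
    rw [h2, h] at this
    have h0 : P a b z n = 0 := by simpa [(ha _).ne] using this
    exact ih h0 h

/-- The Christoffel–Darboux identity. -/
lemma CD {a b : ℤ → ℝ} (ha : ∀ n, a n < 0) (z w : ℝ) (n : ℕ) :
    a n * (P a b z n * P a b w (n + 1) - P a b w n * P a b z (n + 1))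
      = (w - z) * ∑ k ∈ Finset.range (n + 1), P a b z k * P a b w k := by
  induction n with
  | zero => simp [P]
  | succ n ih =>
    rw [Finset.sum_range_succ, mul_add, ← ih]
    push_cast
    linear_combination P a b z (n + 1) * P_rec (b := b) ha w n
      - P a b w (n + 1) * P_rec (b := b) ha z n

open Topology Filter in
/-- At a zero `z` of `P · (n + 1)`, this function crosses zero in a direction fixed by the
sign of `P z n`. -/
lemma P_cross {a b : ℤ → ℝ} (ha : ∀ n, a n < 0) (z : ℝ) (n : ℕ) (h : P a b z (n + 1) = 0) :
    ∀ᶠ w in 𝓝 z, (w < z → 0 < P a b z n * P a b w (n + 1)) ∧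
      (z < w → P a b z n * P a b w (n + 1) < 0) := by
  have hn : 1 < n + 1 := by
    rcases n with _ | n
    · simp [P] at h
    · omega
  have hc : Continuous fun w => ∑ k ∈ Finset.range (n + 1), P a b z k * P a b w k :=
    continuous_finsetSum _ fun k _ => continuous_const.mul (P_cont a b k)
  have hp : 0 < ∑ k ∈ Finset.range (n + 1), P a b z k * P a b z k :=
    Finset.sum_pos' (fun k _ => mul_self_nonneg _) ⟨1, Finset.mem_range.2 hn, by simp [P]⟩
  filter_upwards [hc.continuousAt.eventually (lt_mem_nhds hp)] with w hw
  have := CD (b := b) ha z w n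
  rw [h, mul_zero, sub_zero] at this
  refine ⟨fun hl => ?_, fun hl => ?_⟩
  · have h1 := mul_neg_of_neg_of_pos (sub_neg.2 hl) hw
    rw [← this] at h1
    exact (neg_iff_pos_of_mul_neg h1).1 (ha n)
  · have h1 := mul_pos (sub_pos.2 hl) hw
    rw [← this] at h1
    exact neg_of_mul_pos_right h1 (ha n).le

open Topology Filter in
/-- The node count in `[0, n + 1)` jumps exactly at the zeros of `P · (n + 1)`, to the right of
them, and by one. -/
lemma F_local {a b : ℤ → ℝ} (ha : ∀ n, a n < 0) (n : ℕ) (z : ℝ) :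
    ∀ᶠ w in 𝓝 z, F a b (n + 1) w
      = F a b (n + 1) z + if P a b z (n + 1) = 0 ∧ z < w then 1 else 0 := by
  induction n with
  | zero => simp [F, P, -Finset.sum_boole]
  | succ n ih =>
    have hs : ∀ w, F a b (n + 2) w = F a b (n + 1) w +
        if P a b w (n + 1) = 0 ∨ P a b w (n + 1) * P a b w (n + 2) < 0 then 1 else 0 := by
      intro w; simp only [F, Finset.sum_range_succ _ (n + 1)]
    have c1 := (P_cont a b (n + 1)).continuousAt (x := z)
    have c2 := (P_cont a b (n + 2)).continuousAt (x := z)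
    have cm : ContinuousAt (fun w => P a b w (n + 1) * P a b w (n + 2)) z := c1.mul c2
    simp only [hs]
    by_cases h1 : P a b z (n + 1) = 0
    -- A simultaneous jump of `F (n + 1)` is compensated: the node at `n + 1` is present for
    -- `w ≤ z` and absent for `w > z`.
    · have h2 := P_ne ha z (n + 1) h1
      have h02 : P a b z n * P a b z (n + 2) < 0 := by
        have e := P_rec (b := b) ha z n
        rw [h1] at e
        have h0 : P a b z n ≠ 0 := fun h0 => P_ne ha z n h0 h1
        have p : a n * a ((n : ℤ) + 1) * (P a b z n * P a b z (n + 2)) < 0 := by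
          have : a n * a ((n : ℤ) + 1) * (P a b z n * P a b z (n + 2))
            = - ((a n * P a b z n) * (a n * P a b z n)) := by
            linear_combination (a n * P a b z n) * e
          rw [this]
          exact neg_neg_of_pos (mul_self_pos.2 (mul_ne_zero (ha n).ne h0))
        exact (pos_iff_neg_of_mul_neg p).1 (mul_pos_of_neg_of_neg (ha _) (ha _))
      have c02 : ContinuousAt (fun w => P a b z n * P a b w (n + 2)) z :=
        continuousAt_const.mul c2
      filter_upwards [ih, P_cross ha z n h1, c02.eventually (gt_mem_nhds h02)] with w hw hx hy
      rw [hw]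
      simp only [h1, h2, true_and, false_and, true_or, if_true, if_false]
      rcases lt_trichotomy w z with hl | hl | hl
      · have p := hx.1 hl
        have q : P a b w (n + 1) * P a b w (n + 2) < 0 := by
          have := mul_neg_of_pos_of_neg p hy
          have e : P a b z n * P a b w (n + 1) * (P a b z n * P a b w (n + 2))
            = (P a b z n * P a b z n) * (P a b w (n + 1) * P a b w (n + 2)) := by ring
          rw [e] at this
          exact neg_of_mul_neg_right this (mul_self_nonneg _)
        simp [hl.not_gt, q]
      · simp [hl, h1]
      · have p := hx.2 hl
        have q : 0 < P a b w (n + 1) * P a b w (n + 2) := by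
          have := mul_pos_of_neg_of_neg p hy
          have e : P a b z n * P a b w (n + 1) * (P a b z n * P a b w (n + 2))
            = (P a b z n * P a b z n) * (P a b w (n + 1) * P a b w (n + 2)) := by ring
          rw [e] at this
          exact pos_of_mul_pos_right this (mul_self_nonneg _)
        have q' : P a b w (n + 1) ≠ 0 := left_ne_zero_of_mul q.ne'
        simp [hl, q', q.not_gt]
    · by_cases h2 : P a b z (n + 2) = 0
      · have c11 : ContinuousAt (fun w => P a b z (n + 1) * P a b w (n + 1)) z :=
          continuousAt_const.mul c1
        have h11 : 0 < P a b z (n + 1) * P a b z (n + 1) := mul_self_pos.2 h1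
        filter_upwards [ih, P_cross ha z (n + 1) h2, c11.eventually (lt_mem_nhds h11)]
          with w hw hx hy
        have q' : P a b w (n + 1) ≠ 0 := right_ne_zero_of_mul hy.ne'
        rw [hw]
        have e : P a b z (n + 1) * P a b w (n + 1) * (P a b z (n + 1) * P a b w (n + 2))
            = (P a b z (n + 1) * P a b z (n + 1)) * (P a b w (n + 1) * P a b w (n + 2)) := by ring
        rcases lt_trichotomy w z with hl | hl | hl
        · have p := mul_pos hy (hx.1 hl)
          rw [e] at p
          have q := pos_of_mul_pos_right p h11.le
          simp [h1, h2, hl.not_gt, q', q.not_gt]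
        · simp [hl, h1, h2]
        · have p := mul_neg_of_pos_of_neg hy (hx.2 hl)
          rw [e] at p
          have q := neg_of_mul_neg_right p h11.le
          simp [h1, h2, hl, q', q]
      · rcases lt_or_gt_of_ne (mul_ne_zero h1 h2) with h | h
        · filter_upwards [ih, c1.eventually_ne h1, cm.eventually (gt_mem_nhds h)] with w hw hx hy
          simp [hw, h1, h2, h, hx, hy]
        · filter_upwards [ih, c1.eventually_ne h1, cm.eventually (lt_mem_nhds h)] with w hw hx hy
          simp [hw, h1, h2, h.not_gt, hx, hy.not_gt]

open Filter in
/-- For `z` far to the left, `P z` is positive and nondecreasing, so `0` is its only node. -/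
lemma F_bot {a b : ℤ → ℝ} (ha : ∀ n, a n < 0) (n : ℕ) :
    ∀ᶠ z in atBot, F a b (n + 1) z = 1 := by
  have key : ∀ᶠ z in atBot, ∀ k ∈ Finset.range (n + 1),
      z ≤ b ((k : ℤ) + 1) + a k + a ((k : ℤ) + 1) :=
    (Filter.eventually_all_finset _).2 fun k _ => eventually_le_atBot _
  filter_upwards [key] with z hz
  have mono : ∀ k, k ≤ n → 0 ≤ P a b z k ∧ P a b z k ≤ P a b z (k + 1) ∧ 0 < P a b z (k + 1) := by
    intro k
    induction k with
    | zero => simp [P]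
    | succ k ih =>
      intro hk
      obtain ⟨i1, i2, i3⟩ := ih (by omega)
      have e := P_rec (b := b) ha z k
      have hz' := hz k (Finset.mem_range.2 (by omega))
      have A := ha k
      have A1 := ha ((k : ℤ) + 1)
      have q1 := mul_le_mul_of_nonneg_right hz' i3.le
      have q2 := mul_le_mul_of_nonpos_left i2 A.le
      have : P a b z (k + 1) ≤ P a b z (k + 2) := by
        by_contra hlt
        push Not at hlt
        have := mul_lt_mul_of_neg_left hlt A1
        nlinarith
      exact ⟨i3.le, this, lt_of_lt_of_le i3 this⟩
  rw [F, Finset.sum_range_succ', Finset.sum_eq_zero]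
  · simp [P]
  · intro k hk
    have hk' := Finset.mem_range.1 hk
    have p1 := (mono k (by omega)).2.2
    have p2 := (mono (k + 1) (by omega)).2.2
    rw [if_neg]
    rintro (h | h)
    · exact p1.ne' h
    · exact (mul_pos p1 p2).not_gt h

open Topology Filter in
/-- Sturm oscillation: the node count of `P z` on `[0, n + 1)` is one more than the number of
zeros of `P · (n + 1)` below `z`. -/
lemma F_eq {a b : ℤ → ℝ} (ha : ∀ n, a n < 0) (n : ℕ) (Z : Finset ℝ)
    (hZ : ∀ z, z ∈ Z ↔ P a b z (n + 1) = 0) (z : ℝ) :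
    F a b (n + 1) z = 1 + ∑ μ ∈ Z, if μ < z then 1 else 0 := by
  -- Both sides jump at the same points by the same amount, so the difference is constant on `ℝ`.
  have hloc : IsLocallyConstant fun w => F a b (n + 1) w - ∑ μ ∈ Z, if μ < w then 1 else 0 := by
    rw [IsLocallyConstant.iff_eventually_eq]
    intro x
    have hall : ∀ᶠ w in 𝓝 x, ∀ μ ∈ Z, ((if μ < w then 1 else 0 : ℤ)
        = (if μ < x then 1 else 0) + if μ = x then (if x < w then 1 else 0) else 0) := by
      refine (Filter.eventually_all_finset _).2 fun μ _ => ?_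
      rcases lt_trichotomy μ x with h | h | h
      · filter_upwards [lt_mem_nhds h] with w hw
        simp [h, hw, h.ne]
      · simp [h]
      · filter_upwards [gt_mem_nhds h] with w hw
        simp [h.not_gt, hw.not_gt, h.ne']
    filter_upwards [F_local ha n x, hall] with w hw h
    rw [hw, Finset.sum_congr rfl h, Finset.sum_add_distrib, Finset.sum_ite_eq' Z x]
    simp only [hZ]
    by_cases h1 : P a b x (n + 1) = 0 <;> simp [h1]
  obtain ⟨y, hy1, hy2⟩ := ((F_bot (b := b) ha n).and ((Filter.eventually_all_finset Z).2
    fun μ _ => eventually_le_atBot μ)).exists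
  have := hloc.apply_eq_of_preconnectedSpace z y
  simp only [hy1] at this
  rw [Finset.sum_eq_zero (s := Z) (f := fun μ => if μ < y then (1 : ℤ) else 0)
    (fun μ hμ => by simp [(hy2 μ hμ)])] at this
  linarith

/-! ### Eigenvalues of the Jacobi matrix -/

/-- On a sequence vanishing at `0` and `M + 1` the Jacobi matrix acts as the difference
expression. -/
lemma jMatrix_mulVec (M : ℕ) (a b : ℤ → ℝ) (w : ℕ → ℝ) (h0 : w 0 = 0) (hN : w (M + 1) = 0)
    (i : Fin M) :
    (jMatrix (M + 1) a b).mulVec (fun j : Fin M => w (j + 1)) i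
      = a ((i : ℕ) + 1) * w (i + 2) + a (i : ℕ) * w i + b ((i : ℕ) + 1) * w (i + 1) := by
  obtain ⟨i, hi⟩ := i
  have e : (jMatrix (M + 1) a b).mulVec (fun j : Fin M => w (j + 1)) ⟨i, hi⟩
      = ∑ k ∈ Finset.range M, ((if i + 1 = k then a ((i : ℤ) + 1) * w (k + 1) else 0)
        + (if k + 1 = i then a (i : ℤ) * w i else 0)
        + (if i = k then b ((i : ℤ) + 1) * w (i + 1) else 0)) := by
    rw [Finset.sum_range]
    simp only [Matrix.mulVec, dotProduct]
    refine Finset.sum_congr rfl fun j _ => ?_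
    obtain ⟨j, hj⟩ := j
    simp only [jMatrix]
    by_cases c1 : i = j
    · subst c1; simp
    · by_cases c2 : i + 1 = j
      · subst c2; simp; omega
      · by_cases c3 : j + 1 = i
        · subst c3; simp [c2]
        · simp [c1, c2, c3]
  rw [e, Finset.sum_add_distrib, Finset.sum_add_distrib]
  congr 1
  · congr 1
    · rw [Finset.sum_ite_eq]
      split_ifs with h
      · rfl
      · have : i + 2 = M + 1 := by have := Finset.mem_range.not.1 h; omega
        simp [this, hN]
    · rcases i with _ | i
      · simp [h0]
      · simp only [Nat.add_right_cancel_iff]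
        rw [Finset.sum_ite_eq' (Finset.range M) i]
        simp [show i < M by omega]
  · rw [Finset.sum_ite_eq]
    simp [hi]

/-- The eigenvalues of the Jacobi matrix are the zeros of `P · (M + 1)`: an eigenvector, padded by
zeros at both ends, is a multiple of `P`. -/
lemma isEV_iff {a b : ℤ → ℝ} (ha : ∀ n, a n < 0) (M : ℕ) (hM : 1 ≤ M) (z : ℝ) :
    IsEV (jMatrix (M + 1) a b) z ↔ P a b z (M + 1) = 0 := by
  constructor
  · rintro ⟨v, hv, he⟩
    change Fin M → ℝ at v
    set w : ℕ → ℝ := fun n => if n = 0 then 0 else if h : n - 1 < M then v ⟨n - 1, h⟩ else 0 with hw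
    have w0 : w 0 = 0 := by simp [hw]
    have wN : w (M + 1) = 0 := by simp [hw]
    have wv : v = fun j : Fin M => w (j + 1) := by
      funext j; simp [hw]
    have hP := eq_P (b := b) ha z (M + 1) w w0 (by
      intro n hn
      have := congrFun he ⟨n, by omega⟩
      rw [wv, jMatrix_mulVec M a b w w0 wN ⟨n, by omega⟩] at this
      simp only [Pi.smul_apply, smul_eq_mul] at this
      linarith)
    have h1 : w 1 ≠ 0 := by
      intro h1
      apply hv
      rw [wv]
      funext j
      rw [hP _ (by omega), h1, zero_mul]; rfl
    have := hP (M + 1) le_rfl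
    rw [wN] at this
    simpa [h1] using this.symm
  · intro h
    refine ⟨fun j : Fin M => P a b z (j + 1), ?_, ?_⟩
    · intro h
      have := congrFun h ⟨0, by omega⟩
      simp [P] at this
    · funext i
      rw [jMatrix_mulVec M a b (P a b z) rfl h i, P_rec ha]
      simp only [Pi.smul_apply, smul_eq_mul]
      ring

lemma finite_isEV {m : ℕ} (J : Matrix (Fin m) (Fin m) ℝ) : {μ | IsEV J μ}.Finite := by
  refine (Module.End.finite_hasEigenvalue (Matrix.toLin' J)).subset ?_
  rintro μ ⟨v, hv, he⟩
  exact Module.End.hasEigenvalue_of_hasEigenvector (x := v)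
    ⟨Module.End.mem_eigenspace_iff.2 (by simpa using he), hv⟩

/-- The number of nodes of `u` in `[0, N)`. -/
def nn (u : ℤ → ℝ) (N : ℕ) : ℤ := ∑ k ∈ Finset.range N, nd u (k : ℤ)

lemma sol_eq_P {a b u : ℤ → ℝ} {z : ℝ} (ha : ∀ n, a n < 0) (h : IsJSolution a b z u)
    (h0 : u 0 = 0) (n : ℕ) : u n = u 1 * P a b z n := by
  have := eq_P (b := b) ha z n (fun k : ℕ => u k) (by simpa using h0) (by
    intro k _
    have := sol_rec h k
    push_cast
    exact this) n le_rfl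
  simpa using this

lemma nn_eq_F {a b u : ℤ → ℝ} {z : ℝ} (ha : ∀ n, a n < 0) (h : IsJSolution a b z u)
    (h0 : u 0 = 0) (N : ℕ) : nn u N = F a b N z := by
  have h1 : u 1 ≠ 0 := by simpa using sol_ne ha h 0 h0
  refine Finset.sum_congr rfl fun k _ => ?_
  have e := sol_eq_P ha h h0 k
  have e' := sol_eq_P ha h h0 (k + 1)
  push_cast at e'
  have p : 0 < u 1 * u 1 := mul_self_pos.2 h1
  have q : u 1 * P a b z k * (u 1 * P a b z (k + 1)) < 0 ↔ P a b z k * P a b z (k + 1) < 0 := by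
    rw [show u 1 * P a b z k * (u 1 * P a b z (k + 1))
      = (u 1 * u 1) * (P a b z k * P a b z (k + 1)) by ring]
    exact ⟨fun h => neg_of_mul_neg_right h p.le, mul_neg_of_pos_of_neg p⟩
  simp only [nd, e, e', q, mul_eq_zero, h1, false_or]

/-- Sturm oscillation theorem for the solution vanishing at `0`. -/
lemma sturm {a b u : ℤ → ℝ} {z : ℝ} (ha : ∀ n, a n < 0) (h : IsJSolution a b z u)
    (h0 : u 0 = 0) (N : ℕ) (hN : 2 ≤ N) :
    (evCount (jMatrix N a b) (Set.Iio z) : ℤ) = nn u N - 1 ∧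
    (evCount (jMatrix N a b) (Set.Iic z) : ℤ)
      = nn u N - 1 + if u N = 0 then 1 else 0 := by
  obtain ⟨M, rfl⟩ : ∃ M, N = M + 1 := ⟨N - 1, by omega⟩
  have hiff := isEV_iff (b := b) ha M (by omega)
  set Z := (finite_isEV (jMatrix (M + 1) a b)).toFinset with hZ
  have memZ : ∀ x, x ∈ Z ↔ P a b x (M + 1) = 0 := by
    intro x; rw [hZ, Set.Finite.mem_toFinset]; exact hiff x
  have cnt : ∀ (p : ℝ → Prop) [DecidablePred p],
      (evCount (jMatrix (M + 1) a b) {x | p x} : ℤ) = ∑ μ ∈ Z, if p μ then 1 else 0 := by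
    intro p _
    rw [Finset.sum_boole, evCount, ← Set.ncard_coe_finset]
    congr 2
    ext x
    simp [hZ, and_comm]
  have hF := F_eq (b := b) ha M Z memZ z
  rw [nn_eq_F ha h h0, hF]
  have uN : u ((M + 1 : ℕ) : ℤ) = 0 ↔ z ∈ Z := by
    have h1 : u 1 ≠ 0 := by simpa using sol_ne ha h 0 h0
    rw [memZ, sol_eq_P ha h h0 (M + 1)]
    simp [h1]
  constructor
  · rw [show Set.Iio z = {x | x < z} from rfl, cnt]; ring
  · rw [show Set.Iic z = {x | x ≤ z} from rfl, cnt]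
    have : ∀ μ ∈ Z, (if μ ≤ z then (1 : ℤ) else 0)
        = (if μ < z then 1 else 0) + if μ = z then 1 else 0 := by
      intro μ _
      rcases lt_trichotomy μ z with h | h | h
      · simp [h, h.le, h.ne]
      · simp [h]
      · simp [h.not_gt, h.not_ge, h.ne']
    rw [Finset.sum_congr rfl this, Finset.sum_add_distrib, Finset.sum_ite_eq' Z z]
    simp only [uN]
    ring

/-! ### Weighted node counts and boundary terms -/

/-- Summation of `step`: the weighted node count of the Wronskian is the difference of the node
counts of the two solutions, up to boundary terms. -/
lemma cntCC_eq {a0 a1 b0 b1 u0 u1 : ℤ → ℝ} {z0 z1 : ℝ} (ha0 : ∀ n, a0 n < 0)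
    (ha1 : ∀ n, a1 n < 0)
    (h0 : IsJSolution a0 b0 z0 u0) (h1 : IsJSolution a1 b1 z1 u1) (N : ℕ) :
    cntCC a0 a1 u0 u1 0 N
      = nn u1 N - nn u0 N + br a0 a1 u0 u1 N - br a0 a1 u0 u1 0 := by
  have hs : cntCC a0 a1 u0 u1 0 N = ∑ k ∈ Finset.range N, jSgn a0 a1 u0 u1 (k : ℤ) := by
    rw [cntCC]
    symm
    refine Finset.sum_nbij (fun k : ℕ => (k : ℤ)) ?_ ?_ ?_ (fun _ _ => rfl)
    · intro k hk; simpa using hk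
    · intro x _ y _ h; simpa using h
    · intro j hj
      simp only [Finset.coe_Ico, Set.mem_Ico] at hj
      exact ⟨j.toNat, by simp; omega, by simp; omega⟩
  rw [hs]
  clear hs
  induction N with
  | zero => simp [nn]
  | succ N ih =>
    rw [Finset.sum_range_succ, ih, step ha0 ha1 h0 h1 N]
    simp only [nn, Finset.sum_range_succ]
    push_cast
    ring

/-- A solution `u0` vanishing at `n` has reduced angle `π` there, which is not exceeded. -/
lemma br_left_zero {a0 a1 b0 u0 u1 : ℤ → ℝ} {z0 : ℝ} (ha0 : ∀ n, a0 n < 0)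
    (h0 : IsJSolution a0 b0 z0 u0) (n : ℤ) (x : u0 n = 0) : br a0 a1 u0 u1 n = 0 := by
  have s := sg_zero x (sol_ne ha0 h0 n x)
  have t := sg_nonneg_mul u1 n
  have := mul_nonpos_of_nonpos_of_nonneg (ha0 n).le (mul_nonneg (neg_pos.2 s).le t)
  simp only [br, jW, x]
  rw [if_neg]
  linarith

/-- A solution `u1` vanishing at `n` has reduced angle `π` there, which exceeds that of `u0` unless
`u0` vanishes too. -/
lemma br_right_zero {a0 a1 b1 u0 u1 : ℤ → ℝ} {z1 : ℝ} (ha1 : ∀ n, a1 n < 0)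
    (h1 : IsJSolution a1 b1 z1 u1) (n : ℤ) (x : u1 n = 0) :
    br a0 a1 u0 u1 n = if u0 n = 0 then 0 else 1 := by
  have s := sg_zero x (sol_ne ha1 h1 n x)
  by_cases y : u0 n = 0
  · simp [br, jW, x, y]
  · have t := sg_pos_of y
    have := mul_pos_of_neg_of_neg (ha1 n) (mul_neg_of_neg_of_pos s t)
    simp only [br, jW, x, y]
    rw [if_pos]
    · simp
    · linarith

/-- Comparison of the solutions vanishing at `0` and at `N` of the same equation. Their Wronskian
is constant, so all weighted node signs vanish in `cntCC_eq`. -/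
lemma nn_plus {a b up um : ℤ → ℝ} {z : ℝ} (ha : ∀ n, a n < 0) (N : ℕ)
    (hm : IsJSolution a b z um) (hm0 : um 0 = 0) (hp : IsJSolution a b z up)
    (hpN : up N = 0) :
    (up 0 = 0 ↔ um N = 0) ∧ nn up N = nn um N - if um N = 0 then 0 else 1 := by
  have hc : ∀ n : ℤ, jW a a up um (n + 1) = jW a a up um n := by
    intro n
    simp only [jW, show n + 1 + 1 = n + 2 by ring]
    linear_combination up (n + 1) * sol_rec hm n - um (n + 1) * sol_rec hp n
  have hW : ∀ k : ℕ, jW a a up um k = jW a a up um 0 := by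
    intro k
    induction k with
    | zero => rfl
    | succ k ih => push_cast; rw [hc, ih]
  have m1 : um 1 ≠ 0 := by simpa using sol_ne ha hm 0 hm0
  have p1 := sol_ne ha hp N hpN
  have hiff : up 0 = 0 ↔ um N = 0 := by
    have := hW N
    simp only [jW, hpN, hm0] at this
    have e : um N * a N * up (N + 1) = - (up 0 * a 0 * um 1) := by
      simp at this; linarith
    constructor
    · intro h; rw [h] at e; simpa [p1, (ha _).ne] using e
    · intro h; rw [h] at e; simpa [m1, (ha _).ne] using e
  refine ⟨hiff, ?_⟩
  have hz : cntCC a a up um 0 N = 0 := by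
    refine Finset.sum_eq_zero fun j _ => ?_
    simp only [jSgn, hc]
    have q := mul_self_nonneg (jW a a up um j)
    have r : ¬ (jW a a up um j * jW a a up um j < 0) := q.not_gt
    simp only [r, false_or]
    simp
  rw [cntCC_eq ha ha hp hm, br_left_zero ha hp N hpN, br_right_zero ha hm 0 hm0] at hz
  simp only [hiff] at hz
  linarith

/-- Relative Oscillation Theorem (case 0). -/
theorem stmt_0 (N : ℕ) (hN : 2 ≤ N)
    (a0 b0 a1 b1 : ℤ → ℝ)
    (ha0 : ∀ n : ℤ, a0 n < 0) (ha1 : ∀ n : ℤ, a1 n < 0)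
    (lam0 lam1 : ℝ)
    (u0m u0p u1m u1p : ℤ → ℝ)
    (h0m : IsJSolution a0 b0 lam0 u0m) (h0m0 : u0m 0 = 0)
    (h0p : IsJSolution a0 b0 lam0 u0p) (h0pN : u0p (N : ℤ) = 0)
    (h1m : IsJSolution a1 b1 lam1 u1m) (h1m0 : u1m 0 = 0)
    (h1p : IsJSolution a1 b1 lam1 u1p) (h1pN : u1p (N : ℤ) = 0) :
    ((evCount (jMatrix N a1 b1) (Set.Iio lam1) : ℤ)
        - (evCount (jMatrix N a0 b0) (Set.Iic lam0) : ℤ)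
      = cntOC a0 a1 u0p u1m 0 (N : ℤ)) ∧
    ((evCount (jMatrix N a1 b1) (Set.Iio lam1) : ℤ)
        - (evCount (jMatrix N a0 b0) (Set.Iic lam0) : ℤ)
      = cntOC a0 a1 u0m u1p 0 (N : ℤ)) := by
  obtain ⟨-, s0⟩ := sturm ha0 h0m h0m0 N hN
  obtain ⟨s1, -⟩ := sturm ha1 h1m h1m0 N hN
  obtain ⟨i0, p0⟩ := nn_plus ha0 N h0m h0m0 h0p h0pN
  obtain ⟨i1, p1⟩ := nn_plus ha1 N h1m h1m0 h1p h1pN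
  have m0 : u0m 1 ≠ 0 := by simpa using sol_ne ha0 h0m 0 h0m0
  have m1 : u1m 1 ≠ 0 := by simpa using sol_ne ha1 h1m 0 h1m0
  rw [s0, s1]
  constructor
  · rw [cntOC, cntCC_eq ha0 ha1 h0p h1m, br_left_zero ha0 h0p N h0pN, br_right_zero ha1 h1m 0 h1m0]
    have w : jW a0 a1 u0p u1m 0 = 0 ↔ u0m N = 0 := by
      rw [← i0]; simp [jW, h1m0, m1, (ha1 _).ne]
    simp only [w, i0, p0]
    split_ifs <;> ring
  · rw [cntOC, cntCC_eq ha0 ha1 h0m h1p, br_left_zero ha0 h0m 0 h0m0, br_right_zero ha1 h1p N h1pN]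
    have w : jW a0 a1 u0m u1p 0 = 0 ↔ u1m N = 0 := by
      rw [← i1]; simp [jW, h0m0, m0, (ha0 _).ne]
    simp only [w, p1]
    split_ifs <;> ring
end
end

section
/- Let u be a solution of τu = zu with Prüfer variables ρ_u, θ_u, and fix n ∈ ℤ. Then there exists k ∈ ℤ such that, writing θ_u(n) = kπ + γ and θ_u(n+1) = kπ + Γ, one has γ ∈ (0, π] and Γ ∈ (0, 2π), and: (γ ∈ (0, π/2] and Γ ∈ (0, π]) holds if and only if n is not a node of u, while (γ ∈ (π/2, π] and Γ ∈ (π, 2π)) holds if and only if n is a node of u. Moreover, θ_u(n) = kπ + π/2 if and only if θ_u(n+1) = (k+1)π. -/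
/-!
Choose `k` with `γ = θ n - kπ ∈ (0, π]`; the ceiling condition gives `Γ = θ (n+1) - kπ ∈ (0, 2π]`.
Writing the value `u (n+1)` in the Prüfer variables at `n` and at `n+1` yields
`-a(n) ρ(n+1) sin Γ = ρ(n) cos γ`, so `sin Γ` and `cos γ` have the same sign. Their common sign
places `γ` relative to `π/2` and `Γ` relative to `π`. Since `a(n) u(n) u(n+1) = -ρ(n)² sin γ cos γ`,
it also decides whether `n` is a node.

The ceiling condition alone leaves open `γ = π/2`, `Γ = 2π`. There `u (n+1) = 0`, and the
difference equation at `n+1` reads `-a(n+1) u(n+2) = a(n) u(n)`, which forces `cos Γ < 0`.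
-/

open Real

noncomputable section

/-- The node characterization in terms of the reduced angles `γ` and `Γ`. The number `s` is the
sign `(-1)^k` lost in subtracting `kπ` from both angles; `c`, `x` and `v` stand for
`a n`, `u n` and `u (n+1)`, and `r`, `r'` for `ρ n`, `ρ (n+1)`. The last hypothesis is
the consequence of the difference equation at `n+1` when `u (n+1) = 0`. -/
lemma prufer_reduced {c x v r r' γ Γ s : ℝ} (hc : c < 0) (hr : 0 < r) (hr' : 0 < r')
    (hs : s * s = 1) (hγ0 : 0 < γ) (hγπ : γ ≤ π) (hΓ0 : 0 < Γ) (hΓπ : Γ ≤ 2 * π)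
    (hx : x = r * (s * sin γ)) (hv : -c * v = r * (s * cos γ)) (hv' : v = r' * (s * sin Γ))
    (hrec : v = 0 → r' * (s * cos Γ) = c * x) :
    (γ < π / 2 ∧ Γ < π ∧ ¬ (x = 0 ∨ c * x * v > 0)) ∨
    (γ = π / 2 ∧ Γ = π ∧ ¬ (x = 0 ∨ c * x * v > 0)) ∨
    (π / 2 < γ ∧ π < Γ ∧ Γ < 2 * π ∧ (x = 0 ∨ c * x * v > 0)) := by
  have hpi := pi_pos
  have hs0 : s ≠ 0 := by rintro rfl; simp at hs
  have key : -c * r' * sin Γ = r * cos γ := by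
    have h : s * (-c * r' * sin Γ) = s * (r * cos γ) := by
      rw [hv'] at hv; linarith
    exact mul_left_cancel₀ hs0 h
  have hcr : 0 < -c * r' := by nlinarith
  have hprod : c * x * v = -(r * r * (sin γ * cos γ)) := by
    have h : c * x * v = -(x * (-c * v)) := by ring
    rw [h, hv, hx]
    linear_combination (-(r * r * (sin γ * cos γ))) * hs
  rcases lt_trichotomy γ (π / 2) with h | h | h
  · left
    have hcos : 0 < cos γ := cos_pos_of_mem_Ioo ⟨by linarith, h⟩
    have hsin : 0 < sin γ := sin_pos_of_pos_of_lt_pi hγ0 (by linarith)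
    have hsΓ : 0 < sin Γ := by
      refine pos_of_mul_pos_right (a := -c * r') ?_ hcr.le
      rw [key]; positivity
    refine ⟨h, ?_, ?_⟩
    · by_contra! hle
      have := sin_nonneg_of_nonneg_of_le_pi (x := Γ - π) (by linarith) (by linarith)
      rw [sin_sub_pi] at this
      linarith
    · rintro (h0 | h0)
      · rw [hx] at h0
        exact mul_ne_zero hr.ne' (mul_ne_zero hs0 hsin.ne') h0
      · rw [hprod] at h0
        have : 0 < r * r * (sin γ * cos γ) := by positivity
        linarith
  · right; left
    subst h
    rw [cos_pi_div_two, mul_zero] at key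
    have hsΓ : sin Γ = 0 := (mul_eq_zero.1 key).resolve_left hcr.ne'
    have hv0 : v = 0 := by rw [hv', hsΓ]; ring
    have hcosΓ : cos Γ < 0 := by
      have h1 := hrec hv0
      rw [hx, sin_pi_div_two] at h1
      have h2 : s * (r' * cos Γ) = s * (c * r) := by linarith
      have h3 := mul_left_cancel₀ hs0 h2
      have h4 : c * r < 0 := mul_neg_of_neg_of_pos hc hr
      by_contra! h5
      have : 0 ≤ r' * cos Γ := by positivity
      linarith
    refine ⟨rfl, ?_, ?_⟩
    · rcases lt_trichotomy Γ π with h | h | h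
      · exact absurd hsΓ (sin_pos_of_pos_of_lt_pi hΓ0 h).ne'
      · exact h
      · exfalso
        rcases hΓπ.lt_or_eq with h' | h'
        · have := sin_pos_of_pos_of_lt_pi (x := Γ - π) (by linarith) (by linarith)
          rw [sin_sub_pi] at this
          linarith
        · rw [h', cos_two_pi] at hcosΓ
          linarith
    · rintro (h0 | h0)
      · rw [hx, sin_pi_div_two] at h0
        exact mul_ne_zero hr.ne' (mul_ne_zero hs0 one_ne_zero) h0
      · rw [hv0] at h0
        simp at h0
  · right; right
    have hcos : cos γ < 0 := cos_neg_of_pi_div_two_lt_of_lt h (by linarith)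
    have hsΓ : sin Γ < 0 := by
      by_contra! h5
      have h6 : 0 ≤ -c * r' * sin Γ := mul_nonneg hcr.le h5
      have h7 : r * cos γ < 0 := mul_neg_of_pos_of_neg hr hcos
      linarith
    refine ⟨h, ?_, ?_, ?_⟩
    · by_contra! hle
      linarith [sin_nonneg_of_nonneg_of_le_pi hΓ0.le hle]
    · refine hΓπ.lt_of_ne ?_
      rintro rfl
      simp at hsΓ
    · rcases hγπ.lt_or_eq with h' | h'
      · right
        have hsin : 0 < sin γ := sin_pos_of_pos_of_lt_pi hγ0 h'
        rw [hprod]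
        have : 0 < r * r * (sin γ * -cos γ) := by
          have : 0 < -cos γ := by linarith
          positivity
        linarith
      · left
        rw [hx, h', sin_pi]; ring

/-- Characterization of nodes via Prüfer angles. -/
theorem stmt_7 (a b : ℤ → ℝ) (ha : ∀ n : ℤ, a n < 0) (z : ℝ) (u ρ θ : ℤ → ℝ)
    (hu : IsJSolution a b z u) (hp : IsPrufer a u ρ θ) (n : ℤ) :
    ∃ k : ℤ,
      θ n - k * π ∈ Set.Ioc 0 π ∧
      θ (n + 1) - k * π ∈ Set.Ioo 0 (2 * π) ∧
      ((θ n - k * π ∈ Set.Ioc 0 (π / 2) ∧ θ (n + 1) - k * π ∈ Set.Ioc 0 π)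
        ↔ ¬ IsNode a u n) ∧
      ((θ n - k * π ∈ Set.Ioc (π / 2) π ∧ θ (n + 1) - k * π ∈ Set.Ioo π (2 * π))
        ↔ IsNode a u n) ∧
      (θ n = k * π + π / 2 ↔ θ (n + 1) = (k + 1) * π) := by
  have hpi := pi_pos
  obtain ⟨hr, hx, hv, hlo, hhi⟩ := hp n
  obtain ⟨hr', hv', hw, -, -⟩ := hp (n + 1)
  obtain ⟨k, hk⟩ : ∃ k : ℤ, ⌈θ n / π⌉ = k + 1 := ⟨⌈θ n / π⌉ - 1, by ring⟩
  rw [hk] at hlo hhi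
  have hγ0 : 0 < θ n - k * π := by
    have h : k < ⌈θ n / π⌉ := by omega
    rw [Int.lt_ceil, lt_div_iff₀ hpi] at h
    linarith
  have hγπ : θ n - k * π ≤ π := by
    have h := Int.ceil_le.1 hk.le
    rw [div_le_iff₀ hpi] at h
    push_cast at h
    linarith
  have hΓ0 : 0 < θ (n + 1) - k * π := by
    have h : k < ⌈θ (n + 1) / π⌉ := by omega
    rw [Int.lt_ceil, lt_div_iff₀ hpi] at h
    linarith
  have hΓπ : θ (n + 1) - k * π ≤ 2 * π := by
    have h := Int.ceil_le.1 hhi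
    rw [div_le_iff₀ hpi] at h
    push_cast at h
    linarith
  have hs : ((-1 : ℝ) ^ k) * (-1) ^ k = 1 := by
    rw [← mul_zpow]; simp
  have hsin : ∀ t : ℝ, sin t = (-1) ^ k * sin (t - k * π) := fun t => by
    rw [sin_sub_int_mul_pi, ← mul_assoc, hs, one_mul]
  have hcos : ∀ t : ℝ, cos t = (-1) ^ k * cos (t - k * π) := fun t => by
    rw [cos_sub_int_mul_pi, ← mul_assoc, hs, one_mul]
  rw [hsin] at hx hv'
  rw [hcos] at hv hw
  have hrec : u (n + 1) = 0 →
      ρ (n + 1) * ((-1) ^ k * cos (θ (n + 1) - k * π)) = a n * u n := by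
    intro h0
    have h := hu.2 (n + 1)
    rw [jTau, add_sub_cancel_right, h0] at h
    linarith
  have main := prufer_reduced (ha n) hr hr' hs hγ0 hγπ hΓ0 hΓπ hx hv hv' hrec
  change (_ ∧ _ ∧ ¬ IsNode a u n) ∨ (_ ∧ _ ∧ ¬ IsNode a u n) ∨ (_ ∧ _ ∧ _ ∧ IsNode a u n) at main
  refine ⟨k, ⟨hγ0, hγπ⟩, ?_⟩
  simp only [Set.mem_Ioc, Set.mem_Ioo]
  rcases main with ⟨h1, h2, h3⟩ | ⟨h1, h2, h3⟩ | ⟨h1, h2, h3, h4⟩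
  · refine ⟨⟨hΓ0, by linarith⟩, iff_of_true ⟨⟨hγ0, h1.le⟩, hΓ0, h2.le⟩ h3,
      iff_of_false (fun h => by linarith [h.1.1]) h3,
      iff_of_false (fun h => by linarith) (fun h => by linarith)⟩
  · refine ⟨⟨hΓ0, by linarith⟩, iff_of_true ⟨⟨hγ0, h1.le⟩, hΓ0, h2.le⟩ h3,
      iff_of_false (fun h => by linarith [h.1.1]) h3,
      iff_of_true (by linarith) (by linarith)⟩
  · refine ⟨⟨hΓ0, h3⟩, iff_of_false (fun h => by linarith [h.1.2]) (not_not.2 h4),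
      iff_of_true ⟨⟨h1, hγπ⟩, h2, h3⟩ h4,
      iff_of_false (fun h => by linarith) (fun h => by linarith)⟩
end
end
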